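/- Let d ≥ 2 be an integer and let x₁,…,x_d be positive real numbers, with elementary symmetric polynomials e₁,…,e_d and q(τ) = ∏_{i=1}^d (τ + x_i). Then the entropy satisfies H(x₁,…,x_d) = e₁ + e₁·( ∫₀^∞ [ τ^{d−1}/q(τ) − 1/(τ+1) ] dτ − 1 ) + Σ_{k=2}^d k·e_k·∫₀^∞ τ^{d−k}/q(τ) dτ. (This is the identity H = e₁ + Σ_{k=1}^d k e_k ∂H/∂e_k, with ∂H/∂e₁ = ∫₀^∞[τ^{d−1}/q − 1/(τ+1)]dτ − 1 and ∂H/∂e_k = ∫₀^∞ τ^{d−k}/q dτ for k ≥ 2.) -/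

import Mathlib

open MeasureTheory Real

/-!
The polynomial `∏ (xᵢ t + τ) = ∑ eₖ τ^(d-k) tᵏ` in `t`, differentiated at `t = 1`, yields
`∑ k eₖ τ^(d-k) = ∑ xᵢ ∏_{j ≠ i} (τ + xⱼ)`, and dividing by `q(τ)` turns this into the partial
fraction expansion `∑ k eₖ τ^(d-k) / q(τ) = ∑ xᵢ / (τ + xᵢ)`. Every term with `k ≥ 2` is
integrable on the half-axis, while both the term `k = 1` and the right-hand side decay only like
`e₁ / τ`. Subtracting `e₁ / (τ + c)` from both sides makes them integrable, and the right-hand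
side then integrates to `∑ xᵢ log (c / xᵢ)`.
-/

open Filter Set Topology

section Esymm

variable {ι R : Type*}

theorem esymm_map_val_one [CommSemiring R] (s : Finset ι) (x : ι → R) :
    (s.val.map x).esymm 1 = ∑ i ∈ s, x i := by
  simp [Finset.esymm_map_val, Finset.powersetCard_one]

theorem prod_mul_add_eq_sum_esymm [CommSemiring R] (s : Finset ι) (x : ι → R) (a b : R) :
    ∏ i ∈ s, (x i * a + b) =
      ∑ k ∈ Finset.range (s.card + 1), (s.val.map x).esymm k * b ^ (s.card - k) * a ^ k := by
  classical
  rw [Finset.prod_add, Finset.sum_powerset]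
  refine Finset.sum_congr rfl fun k _ ↦ ?_
  simp only [Finset.esymm_map_val, Finset.sum_mul]
  refine Finset.sum_congr rfl fun t ht ↦ ?_
  obtain ⟨hts, rfl⟩ := Finset.mem_powersetCard.1 ht
  rw [Finset.prod_mul_distrib, Finset.prod_const, Finset.prod_const,
    Finset.card_sdiff_of_subset hts]
  ring

open Polynomial in
theorem sum_natCast_mul_esymm_mul_pow [CommSemiring R] [DecidableEq ι] (s : Finset ι)
    (x : ι → R) (τ : R) :
    ∑ k ∈ Finset.range (s.card + 1), k * (s.val.map x).esymm k * τ ^ (s.card - k) =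
      ∑ i ∈ s, x i * ∏ j ∈ s.erase i, (τ + x j) := by
  have expansion : ∏ i ∈ s, (C (x i) * X + C τ) =
      ∑ k ∈ Finset.range (s.card + 1), C ((s.val.map x).esymm k * τ ^ (s.card - k)) * X ^ k := by
    have esymm_C (k : ℕ) : (s.val.map fun i ↦ C (x i)).esymm k = C ((s.val.map x).esymm k) := by
      simp only [Finset.esymm_map_val, map_sum, map_prod]
    simp only [prod_mul_add_eq_sum_esymm s (fun i ↦ C (x i)), esymm_C, C_mul, C_pow]
  calc
    _ = (∑ k ∈ Finset.range (s.card + 1),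
          C ((s.val.map x).esymm k * τ ^ (s.card - k)) * X ^ k).derivative.eval 1 := by
      simp only [derivative_sum, derivative_C_mul_X_pow, eval_finsetSum, eval_mul, eval_C,
        eval_pow, eval_X, one_pow, mul_one]
      exact Finset.sum_congr rfl fun k _ ↦ by ring
    _ = (∏ i ∈ s, (C (x i) * X + C τ)).derivative.eval 1 := by rw [expansion]
    _ = _ := by
      simp [derivative_prod_finset, eval_finsetSum, eval_prod, add_comm τ, mul_comm (x _)]

theorem sum_natCast_mul_esymm_mul_pow_div_prod [Semifield R] (s : Finset ι) (x : ι → R) (τ : R)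
    (hτ : ∀ i ∈ s, τ + x i ≠ 0) :
    ∑ k ∈ Finset.range (s.card + 1),
        k * (s.val.map x).esymm k * (τ ^ (s.card - k) / ∏ i ∈ s, (τ + x i)) =
      ∑ i ∈ s, x i * (1 / (τ + x i)) := by
  classical
  simp only [← mul_div_assoc, ← Finset.sum_div]
  rw [sum_natCast_mul_esymm_mul_pow, Finset.sum_div]
  refine Finset.sum_congr rfl fun i hi ↦ ?_
  have hrest : ∏ j ∈ s.erase i, (τ + x j) ≠ 0 :=
    Finset.prod_ne_zero_iff.2 fun j hj ↦ hτ j (Finset.mem_of_mem_erase hj)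
  rw [← Finset.mul_prod_erase s _ hi, mul_div_mul_right _ _ hrest, mul_one]

theorem esymm_one_mul_pow_div_prod_sub [Field R] (s : Finset ι) (x : ι → R) (τ r : R)
    (hτ : ∀ i ∈ s, τ + x i ≠ 0) :
    (s.val.map x).esymm 1 * (τ ^ (s.card - 1) / ∏ i ∈ s, (τ + x i) - r) =
      ∑ i ∈ s, x i * (1 / (τ + x i) - r) -
        ∑ k ∈ Finset.Icc 2 s.card,
          k * (s.val.map x).esymm k * (τ ^ (s.card - k) / ∏ i ∈ s, (τ + x i)) := by
  obtain rfl | hs := s.eq_empty_or_nonempty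
  · rw [esymm_map_val_one]
    simp
  have hrange : Finset.range (s.card + 1) = insert 0 (insert 1 (Finset.Icc 2 s.card)) := by
    ext k
    have := hs.card_pos
    simp only [Finset.mem_range, Finset.mem_insert, Finset.mem_Icc]
    omega
  have h := sum_natCast_mul_esymm_mul_pow_div_prod s x τ hτ
  rw [hrange, Finset.sum_insert (by simp), Finset.sum_insert (by simp), Nat.cast_zero, zero_mul,
    zero_mul, zero_add, Nat.cast_one, one_mul] at h
  simp only [mul_sub, Finset.sum_sub_distrib, ← Finset.sum_mul, ← h, esymm_map_val_one]
  ring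

end Esymm

section HalfAxis

theorem tendsto_log_add_sub_log_add (a b : ℝ) :
    Tendsto (fun τ ↦ log (τ + a) - log (τ + b)) atTop (𝓝 0) := by
  simpa using (tendsto_log_comp_add_sub_log a).sub (tendsto_log_comp_add_sub_log b)

theorem hasDerivAt_log_add_sub_log_add {a b τ : ℝ} (ha : τ + a ≠ 0) (hb : τ + b ≠ 0) :
    HasDerivAt (fun τ ↦ log (τ + a) - log (τ + b)) (1 / (τ + a) - 1 / (τ + b)) τ :=
  (((hasDerivAt_id τ).add_const a).log ha).sub (((hasDerivAt_id τ).add_const b).log hb)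

theorem integrableOn_Ioi_one_div_add_sub_one_div_add {a b : ℝ} (ha : 0 < a) (hb : 0 < b) :
    IntegrableOn (fun τ : ℝ ↦ 1 / (τ + a) - 1 / (τ + b)) (Ioi 0) := by
  wlog hab : a ≤ b generalizing a b
  · exact (this hb ha (le_of_not_ge hab)).neg.congr_fun (fun τ _ ↦ neg_sub _ _) measurableSet_Ioi
  refine integrableOn_Ioi_deriv_of_nonneg' (fun τ (hτ : 0 ≤ τ) ↦ ?_) (fun τ (hτ : 0 < τ) ↦ ?_)
    (tendsto_log_add_sub_log_add a b)
  · exact hasDerivAt_log_add_sub_log_add (by positivity) (by positivity)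
  · rw [sub_nonneg]
    gcongr

theorem integral_Ioi_one_div_add_sub_one_div_add {a b : ℝ} (ha : 0 < a) (hb : 0 < b) :
    ∫ τ in Ioi (0 : ℝ), (1 / (τ + a) - 1 / (τ + b)) = log (b / a) := by
  have hderiv (τ : ℝ) (hτ : 0 ≤ τ) :=
    hasDerivAt_log_add_sub_log_add (a := a) (b := b) (τ := τ) (by positivity) (by positivity)
  rw [integral_Ioi_of_hasDerivAt_of_tendsto' hderiv
    (integrableOn_Ioi_one_div_add_sub_one_div_add ha hb) (tendsto_log_add_sub_log_add a b),
    log_div hb.ne' ha.ne']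
  ring_nf

variable {ι : Type*}

theorem pow_div_prod_add_le {s : Finset ι} {x : ι → ℝ} {c τ : ℝ} (hc : 0 < c)
    (hcx : ∀ i ∈ s, c ≤ x i) (hτ : 0 ≤ τ) (n : ℕ) :
    τ ^ n / ∏ i ∈ s, (τ + x i) ≤ (τ + c) ^ (n - s.card : ℝ) := by
  have hprod : (τ + c) ^ s.card ≤ ∏ i ∈ s, (τ + x i) :=
    Finset.prod_const (τ + c) (s := s) ▸
      Finset.prod_le_prod (fun i _ ↦ by positivity) fun i hi ↦ by gcongr; exact hcx i hi
  rw [rpow_sub (by positivity), rpow_natCast, rpow_natCast]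
  gcongr
  exact le_add_of_nonneg_right hc.le

theorem integrableOn_Ioi_pow_div_prod_add {s : Finset ι} {x : ι → ℝ} (hx : ∀ i ∈ s, 0 < x i)
    {n : ℕ} (hn : n + 2 ≤ s.card) :
    IntegrableOn (fun τ : ℝ ↦ τ ^ n / ∏ i ∈ s, (τ + x i)) (Ioi 0) := by
  obtain ⟨i₀, hi₀, hmin⟩ := s.exists_min_image x (Finset.card_pos.1 (by omega))
  have hexp : (n - s.card : ℝ) < -1 := by
    have : (n + 2 : ℝ) ≤ s.card := mod_cast hn
    linarith
  refine (integrableOn_add_rpow_Ioi_of_lt hexp (neg_lt_zero.2 (hx i₀ hi₀))).mono'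
    (by fun_prop : Measurable _).aestronglyMeasurable
    (ae_restrict_of_forall_mem measurableSet_Ioi fun τ (hτ : 0 < τ) ↦ ?_)
  have hq : 0 ≤ ∏ i ∈ s, (τ + x i) := Finset.prod_nonneg fun i hi ↦ (add_pos hτ (hx i hi)).le
  rw [norm_of_nonneg (by positivity)]
  exact pow_div_prod_add_le (hx i₀ hi₀) hmin hτ.le n

end HalfAxis

theorem entropy_euler_identity_general {ι : Type*} (s : Finset ι) (x : ι → ℝ)
    (hx : ∀ i ∈ s, 0 < x i) {c : ℝ} (hc : 0 < c) :
    ∑ i ∈ s, x i * log (c / x i) =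
      (s.val.map x).esymm 1 *
        (∫ τ in Ioi (0 : ℝ), (τ ^ (s.card - 1) / ∏ i ∈ s, (τ + x i) - 1 / (τ + c))) +
      ∑ k ∈ Finset.Icc 2 s.card, k * (s.val.map x).esymm k *
        ∫ τ in Ioi (0 : ℝ), τ ^ (s.card - k) / ∏ i ∈ s, (τ + x i) := by
  have hlog : ∀ i ∈ s,
      IntegrableOn (fun τ ↦ x i * (1 / (τ + x i) - 1 / (τ + c))) (Ioi 0) := fun i hi ↦
    (integrableOn_Ioi_one_div_add_sub_one_div_add (hx i hi) hc).const_mul _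
  have hrat : ∀ k ∈ Finset.Icc 2 s.card, IntegrableOn (fun τ ↦
      k * (s.val.map x).esymm k * (τ ^ (s.card - k) / ∏ i ∈ s, (τ + x i))) (Ioi 0) := fun k hk ↦
    (integrableOn_Ioi_pow_div_prod_add hx (by have := Finset.mem_Icc.1 hk; omega)).const_mul _
  rw [eq_comm, ← eq_sub_iff_add_eq, ← integral_const_mul]
  calc
    _ = ∫ τ in Ioi (0 : ℝ), (∑ i ∈ s, x i * (1 / (τ + x i) - 1 / (τ + c)) -
          ∑ k ∈ Finset.Icc 2 s.card,
            k * (s.val.map x).esymm k * (τ ^ (s.card - k) / ∏ i ∈ s, (τ + x i))) :=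
      setIntegral_congr_fun measurableSet_Ioi fun τ (hτ : 0 < τ) ↦
        esymm_one_mul_pow_div_prod_sub s x τ _ fun i hi ↦ (add_pos hτ (hx i hi)).ne'
    _ = ∑ i ∈ s, x i * (∫ τ in Ioi (0 : ℝ), (1 / (τ + x i) - 1 / (τ + c))) -
          ∑ k ∈ Finset.Icc 2 s.card, k * (s.val.map x).esymm k *
            ∫ τ in Ioi (0 : ℝ), τ ^ (s.card - k) / ∏ i ∈ s, (τ + x i) := by
      rw [integral_sub (integrable_finsetSum _ hlog) (integrable_finsetSum _ hrat),
        integral_finsetSum _ hlog, integral_finsetSum _ hrat]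
      simp only [integral_const_mul]
    _ = _ := by
      congr 1
      exact Finset.sum_congr rfl fun i hi ↦ by
        rw [integral_Ioi_one_div_add_sub_one_div_add (hx i hi) hc]

/-- **The identity `H = e₁ + Σ_k k e_k ∂H/∂e_k` via half-axis integrals.**
For `d ≥ 2` and positive reals `x₁, …, x_d` with elementary symmetric
polynomials `e_k` and `q(τ) = ∏ (τ + xᵢ)`:
`H = e₁ + e₁ (∫₀^∞ [τ^{d−1}/q − 1/(τ+1)] dτ − 1) + Σ_{k=2}^d k e_k ∫₀^∞ τ^{d−k}/q dτ`. -/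
theorem entropy_euler_identity (d : ℕ) (hd : 2 ≤ d) (x : Fin d → ℝ)
    (hx : ∀ i, 0 < x i)
    (e : ℕ → ℝ)
    (he : ∀ k, e k = ∑ t ∈ Finset.powersetCard k (Finset.univ : Finset (Fin d)),
      ∏ i ∈ t, x i) :
    (-∑ i, x i * Real.log (x i)) =
      e 1
      + e 1 * ((∫ τ in Set.Ioi (0 : ℝ),
          (τ ^ (d - 1) / (∏ i, (τ + x i)) - 1 / (τ + 1))) - 1)
      + ∑ k ∈ Finset.Icc 2 d,
          (k : ℝ) * e k * ∫ τ in Set.Ioi (0 : ℝ), τ ^ (d - k) / (∏ i, (τ + x i)) := by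
  obtain rfl : e = (Finset.univ.val.map x).esymm :=
    funext fun k ↦ (he k).trans (Finset.esymm_map_val x _ k).symm
  have h := entropy_euler_identity_general Finset.univ x (fun i _ ↦ hx i) one_pos
  simp only [one_div, log_inv, mul_neg, Finset.sum_neg_distrib, Finset.card_fin] at h ⊢
  linear_combination h
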